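/- arXiv:2410.14750 — 2 statements merged into one kernel-verified Lean document; each statement's English description precedes it below -/
import Mathlib

section
/- Let R be a Noetherian commutative ring and λ an infinite cardinal (index set). Then the R-module R^λ is projective if and only if R is Artinian. -/
universe u

/-!
If `R^ι` is projective and `p` is a prime of `R`, base change along `R → R/p` makes `D^ι` projective
over the Noetherian domain `D = R/p`, so `D^ℕ` embeds in a free module `D^(B)`. Let `x` be a nonzero
nonunit of `D`. Precompose with multiplication by `(1, x, x², …)`: since `D` is `x`-adically
separated, the nonvanishing of a coordinate of the resulting map is an open condition on `D^ℕ`, a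
product of discrete spaces. By Baire, all sequences starting with enough zeros are then supported in
one finite subset of `B`, which is impossible for reasons of rank. So every `R/p` is a field.

Conversely, a product of flat modules over a Noetherian ring is flat. An Artinian ring is a finite
product of local rings with nilpotent maximal ideal, and over these, by Nakayama without finiteness
conditions, a flat module is free on any lift of a basis of its reduction to the residue field.
-/

section PiTensor

open TensorProduct

theorem exact_piMap {R ι : Type*} [Semiring R] {A B C : ι → Type*}
    [∀ i, AddCommMonoid (A i)] [∀ i, Module R (A i)]
    [∀ i, AddCommMonoid (B i)] [∀ i, Module R (B i)]
    [∀ i, AddCommMonoid (C i)] [∀ i, Module R (C i)]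
    {f : ∀ i, A i →ₗ[R] B i} {g : ∀ i, B i →ₗ[R] C i} (h : ∀ i, Function.Exact (f i) (g i)) :
    Function.Exact (LinearMap.piMap f) (LinearMap.piMap g) := by
  intro y
  simp [funext_iff, h _ _, Classical.skolem]

theorem piRightHom_bijective_of_finite_free {R : Type*} [CommSemiring R] (κ : Type*) [Finite κ]
    {ι : Type*} (M : ι → Type*) [∀ i, AddCommMonoid (M i)] [∀ i, Module R (M i)] :
    Function.Bijective (piRightHom R R (κ → R) M) := by
  classical
  have := Fintype.ofFinite κ
  let e : (κ → R) ⊗[R] (∀ i, M i) ≃ₗ[R] (κ → ∀ i, M i) :=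
    TensorProduct.comm R _ _ ≪≫ₗ piScalarRight R R _ κ
  let e' (i : ι) : (κ → R) ⊗[R] M i ≃ₗ[R] (κ → M i) :=
    TensorProduct.comm R _ _ ≪≫ₗ piScalarRight R R (M i) κ
  have comm_sq (t : (κ → R) ⊗[R] (∀ i, M i)) :
      (fun i ↦ e' i (piRightHom R R (κ → R) M t i)) = Function.swap (e t) := by
    induction t with
    | zero => simp [Function.swap, funext_iff]
    | add s t hs ht => simp_all [Function.swap, funext_iff]
    | tmul c m => ext i k; simp [e, e', Function.swap]
  have : Function.Bijective (Pi.map (fun i ↦ e' i) ∘ piRightHom R R (κ → R) M) := by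
    convert (Equiv.piComm fun (_ : κ) i ↦ M i).bijective.comp e.bijective using 1
    exact funext comm_sq
  exact (Function.Bijective.of_comp_iff' (.piMap fun i ↦ (e' i).bijective) _).mp this

variable {R : Type*} [CommRing R]

theorem piRightHom_bijective (N : Type*) [AddCommGroup N] [Module R N]
    [Module.FinitePresentation R N] {ι : Type*} (M : ι → Type*)
    [∀ i, AddCommGroup (M i)] [∀ i, Module R (M i)] :
    Function.Bijective (piRightHom R R N M) := by
  obtain ⟨n, m, f, g, hf, hgf⟩ := Module.FinitePresentation.exists_fin' R N
  exact LinearMap.bijective_of_surjective_of_bijective_of_right_exact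
    (g.rTensor (∀ i, M i)) (f.rTensor (∀ i, M i)) _ _
    (piRightHom R R _ M) (piRightHom R R _ M) (piRightHom R R N M)
    (by ext; rfl) (by ext; rfl) (rTensor_exact _ hgf hf)
    (exact_piMap fun i ↦ rTensor_exact (M i) hgf hf)
    (piRightHom_bijective_of_finite_free _ M).2 (piRightHom_bijective_of_finite_free _ M)
    (LinearMap.rTensor_surjective _ hf)
    (Function.Surjective.piMap fun i ↦ LinearMap.rTensor_surjective _ hf)

theorem flat_pi [IsNoetherianRing R] {ι : Type*} (M : ι → Type*)
    [∀ i, AddCommGroup (M i)] [∀ i, Module R (M i)] [∀ i, Module.Flat R (M i)] :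
    Module.Flat R (∀ i, M i) := by
  rw [Module.Flat.iff_rTensor_injective]
  intro I _
  have := Module.finitePresentation_of_finite R I
  have comm_sq : piRightHom R R R M ∘ₗ I.subtype.rTensor (∀ i, M i) =
      LinearMap.piMap (fun i ↦ I.subtype.rTensor (M i)) ∘ₗ piRightHom R R I M := by
    ext; rfl
  have : Function.Injective (piRightHom R R R M ∘ₗ I.subtype.rTensor (∀ i, M i)) := by
    rw [comm_sq, LinearMap.coe_comp]
    exact (Function.Injective.piMap fun i ↦
      Module.Flat.rTensor_preserves_injective_linearMap _ I.subtype_injective).comp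
      (piRightHom_bijective I M).1
  exact Function.Injective.of_comp (f := piRightHom R R R M) this

theorem projective_pi_of_finitePresentation (R S : Type*) [CommRing R] [CommRing S]
    [Algebra R S] [Module.FinitePresentation R S] (ι : Type*) [Module.Projective R (ι → R)] :
    Module.Projective S (ι → S) :=
  .of_equiv <|
    .ofBijective (piRightHom R S S fun _ : ι ↦ R) (piRightHom_bijective S _) ≪≫ₗ
    .piCongrRight fun _ ↦ AlgebraTensorModule.rid R S S

end PiTensor

section FlatArtinian

open TensorProduct IsLocalRing

theorem le_of_isNilpotent_of_le_sup_smul {R M : Type*} [CommSemiring R] [AddCommMonoid M]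
    [Module R M] {I : Ideal R} (hI : IsNilpotent I) {N N' : Submodule R M}
    (h : N' ≤ N ⊔ I • N') : N' ≤ N := by
  have le_sup_pow (n : ℕ) : N' ≤ N ⊔ I ^ n • N' := by
    induction n with
    | zero => simp
    | succ n ih =>
      calc N' ≤ N ⊔ I • N' := h
        _ ≤ N ⊔ I • (N ⊔ I ^ n • N') := by gcongr
        _ ≤ N ⊔ I ^ (n + 1) • N' := by
          rw [Submodule.smul_sup, ← Submodule.mul_smul, ← pow_succ', ← sup_assoc]
          exact sup_le_sup_right (sup_le le_rfl Submodule.smul_le_right) _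
  obtain ⟨n, hn⟩ := hI
  simpa [hn] using le_sup_pow n

section LocalRing

variable {R M : Type*} [CommRing R] [IsLocalRing R] [AddCommGroup M] [Module R M]

theorem span_eq_top_of_isNilpotent_maximalIdeal (hR : IsNilpotent (maximalIdeal R)) {s : Set M}
    (hs : Submodule.span (ResidueField R) (TensorProduct.mk R (ResidueField R) M 1 '' s) = ⊤) :
    Submodule.span R s = ⊤ := by
  have map_eq_top : (Submodule.span R s).map (TensorProduct.mk R (ResidueField R) M 1) = ⊤ := by
    rw [Submodule.map_span, ← Submodule.restrictScalars_span R (ResidueField R)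
      Ideal.Quotient.mk_surjective, hs, Submodule.restrictScalars_top]
  have sup_eq_top : Submodule.span R s ⊔ maximalIdeal R • ⊤ = ⊤ := by
    have ker_eq : LinearMap.ker (TensorProduct.mk R (ResidueField R) M 1) =
        maximalIdeal R • (⊤ : Submodule R M) := LinearMap.ker_tensorProductMk M
    rw [← ker_eq, ← Submodule.comap_map_eq, map_eq_top, Submodule.comap_top]
  exact top_le_iff.mp (le_of_isNilpotent_of_le_sup_smul hR sup_eq_top.ge)

theorem free_of_flat_of_isNilpotent_maximalIdeal (hR : IsNilpotent (maximalIdeal R))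
    [Module.Flat R M] : Module.Free R M := by
  let b := Module.Free.chooseBasis (ResidueField R) (ResidueField R ⊗[R] M)
  obtain ⟨v, hv⟩ : ∃ v, TensorProduct.mk R (ResidueField R) M 1 ∘ v = b :=
    (mk_surjective R M (ResidueField R) Ideal.Quotient.mk_surjective).comp_left b
  have linearIndependent_v : LinearIndependent R v :=
    Module.IsLocalRing.linearIndependent_of_flat v (hv ▸ b.linearIndependent)
  have span_v : Submodule.span R (Set.range v) = ⊤ := by
    apply span_eq_top_of_isNilpotent_maximalIdeal hR
    rw [← Set.range_comp, hv, b.span_eq]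
  exact .of_basis (.mk linearIndependent_v span_v.ge)

end LocalRing

theorem projective_trans {R : Type*} [CommSemiring R] (S : Type*) [Semiring S] [Algebra R S]
    (P : Type*) [AddCommMonoid P] [Module R P] [Module S P] [IsScalarTower R S P]
    [Module.Projective R S] [Module.Projective S P] : Module.Projective R P := by
  classical
  obtain ⟨s, hs⟩ := Module.projective_def'.mp ‹Module.Projective S P›
  have : Module.Projective R (P →₀ S) := .of_equiv (finsuppLequivDFinsupp R).symm
  exact .of_split (s.restrictScalars R) ((Finsupp.linearCombination S id).restrictScalars R)
    (LinearMap.ext fun x ↦ LinearMap.congr_fun hs x)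

variable {R : Type*} [CommRing R] [IsArtinianRing R]

theorem projective_localization_atPrime (p : PrimeSpectrum R) :
    Module.Projective R (Localization.AtPrime p.asIdeal) := by
  classical
  have : Module.Projective R (PrimeSpectrum.PiLocalization R) :=
    .of_equiv (PrimeSpectrum.toPiLocalizationEquiv R).toLinearEquiv
  exact .of_split (LinearMap.single R (fun q : PrimeSpectrum R ↦ Localization.AtPrime q.asIdeal) p)
    (LinearMap.proj p) (LinearMap.proj_comp_single_same ..)

theorem projective_of_flat_of_isArtinianRing (M : Type*) [AddCommGroup M] [Module R M]
    [Module.Flat R M] : Module.Projective R M := by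
  classical
  have := Fintype.ofFinite (PrimeSpectrum R)
  let L (p : PrimeSpectrum R) := Localization.AtPrime p.asIdeal
  have (p : PrimeSpectrum R) : Module.Projective R (L p ⊗[R] M) := by
    have : IsArtinianRing (L p) := inferInstanceAs (IsArtinianRing (Localization _))
    have : Module.Free (L p) (L p ⊗[R] M) :=
      free_of_flat_of_isNilpotent_maximalIdeal
        ((isArtinianRing_iff_isNilpotent_maximalIdeal (L p)).mp this)
    have := projective_localization_atPrime p
    exact projective_trans (L p) (L p ⊗[R] M)
  have : Module.Projective R (∀ p, L p ⊗[R] M) :=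
    .of_equiv (DirectSum.linearEquivFunOnFintype R _ fun p ↦ L p ⊗[R] M)
  exact .of_equiv <|
    (piLeft R M L).symm ≪≫ₗ
    (PrimeSpectrum.toPiLocalizationEquiv R).toLinearEquiv.symm.rTensor M ≪≫ₗ
    TensorProduct.lid R M

end FlatArtinian

section Baire

open Filter Topology

theorem exists_eventually_eq_of_isOpen {X B : Type*} [TopologicalSpace X] [BaireSpace X]
    [Nonempty X] (S : X → Finset B) (hS : ∀ b, IsOpen {x | b ∈ S x}) :
    ∃ x, ∀ᶠ y in 𝓝 x, S y = S x := by
  have eventually_subset (x : X) : ∀ᶠ y in 𝓝 x, S x ⊆ S y :=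
    (eventually_all_finset (S x)).mpr fun b hb ↦ (hS b).mem_nhds hb
  have isClosed_card_le (k : ℕ) : IsClosed {x | (S x).card ≤ k} := by
    refine isOpen_compl_iff.mp <| isOpen_iff_mem_nhds.mpr fun x hx ↦ ?_
    filter_upwards [eventually_subset x] with y hxy hyk
    exact hx ((Finset.card_le_card hxy).trans hyk)
  obtain ⟨k, hk⟩ := nonempty_interior_of_iUnion_of_closed isClosed_card_le
    (Set.iUnion_eq_univ_iff.mpr fun x ↦ ⟨(S x).card, le_refl (S x).card⟩)
  set U := interior {x | (S x).card ≤ k}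
  have card_le : U ⊆ {x | (S x).card ≤ k} := interior_subset
  obtain ⟨x, hxU, card_max⟩ : ∃ x ∈ U, ∀ y ∈ U, (S y).card ≤ (S x).card := by
    obtain ⟨_, ⟨x, hxU, rfl⟩, card_max⟩ := BddAbove.exists_isGreatest_of_nonempty
      ⟨k, Set.forall_mem_image.mpr card_le⟩ (hk.image fun x ↦ (S x).card)
    exact ⟨x, hxU, fun y hyU ↦ card_max ⟨y, hyU, rfl⟩⟩
  refine ⟨x, ?_⟩
  filter_upwards [eventually_subset x, isOpen_interior.mem_nhds hxU] with y hxy hyU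
  exact (Finset.eq_of_subset_of_card_le hxy (card_max y hyU)).symm

theorem exists_eventually_support_subset {A M B : Type*} [TopologicalSpace A] [BaireSpace A]
    [AddMonoid A] [ContinuousAdd A] [AddMonoid M] (g : A →+ B →₀ M)
    (hg : ∀ b, IsOpen {a | g a b ≠ 0}) : ∃ T : Finset B, ∀ᶠ a in 𝓝 0, (g a).support ⊆ T := by
  obtain ⟨a₀, ha₀⟩ := exists_eventually_eq_of_isOpen (fun a ↦ (g a).support)
    fun b ↦ by simpa using hg b
  refine ⟨(g a₀).support, ?_⟩
  have tendsto_add : Tendsto (fun a ↦ a₀ + a) (𝓝 0) (𝓝 a₀) := by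
    simpa using (continuous_const_add a₀).tendsto 0
  filter_upwards [tendsto_add.eventually ha₀] with a ha b hb
  contrapose hb
  have add_eq_zero : g (a₀ + a) b = 0 := Finsupp.notMem_support_iff.mp (ha ▸ hb)
  rwa [map_add, Finsupp.add_apply, Finsupp.notMem_support_iff.mp hb, zero_add,
    ← Finsupp.notMem_support_iff] at add_eq_zero

end Baire

section Sequences

open Topology nonZeroDivisors

variable {D : Type*}

theorem pow_dvd_map_pow_mul [CommSemiring D] (f : (ℕ → D) →ₗ[D] D) (x : D) {N : ℕ} {a : ℕ → D}
    (ha : ∀ n < N, a n = 0) : x ^ N ∣ f fun n ↦ x ^ n * a n := by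
  have : (fun n ↦ x ^ n * a n) = x ^ N • fun n ↦ x ^ (n - N) * a n := by
    ext n
    obtain hn | hn := lt_or_ge n N
    · simp [ha n hn]
    · simp [← mul_assoc, ← pow_add, hn]
  rw [this, map_smul]
  exact Dvd.intro _ rfl

variable [CommRing D]

theorem isOpen_map_pow_mul_ne_zero [TopologicalSpace D] [DiscreteTopology D] (x : D)
    [IsHausdorff (Ideal.span {x}) D] (f : (ℕ → D) →ₗ[D] D) :
    IsOpen {a : ℕ → D | f (fun n ↦ x ^ n * a n) ≠ 0} := by
  refine isOpen_iff_mem_nhds.mpr fun a ha ↦ ?_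
  obtain ⟨N, hN⟩ : ∃ N, ¬ x ^ N ∣ f fun n ↦ x ^ n * a n := by
    by_contra! h
    refine ha (IsHausdorff.haus ‹_› _ fun n ↦ ?_)
    simpa [Ideal.span_singleton_pow, SModEq.zero, Ideal.mem_span_singleton] using h n
  filter_upwards [(PiNat.isOpen_cylinder _ a N).mem_nhds (PiNat.self_mem_cylinder a N)]
    with a' ha' map_eq_zero
  have sub_eq_zero : ∀ n < N, (a - a') n = 0 := fun n hn ↦ by
    simp [PiNat.mem_cylinder_iff.mp ha' n hn]
  have mul_sub_eq :
      (fun n ↦ x ^ n * (a - a') n) = (fun n ↦ x ^ n * a n) - fun n ↦ x ^ n * a' n :=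
    funext fun n ↦ mul_sub _ _ _
  apply hN
  simpa only [mul_sub_eq, map_sub, map_eq_zero, sub_zero] using pow_dvd_map_pow_mul f x sub_eq_zero

theorem not_injective_of_support_subset [Nontrivial D] {B : Type*} (g : (ℕ → D) →ₗ[D] B →₀ D)
    {N : ℕ} {T : Finset B} (hg : ∀ a : ℕ → D, (∀ n < N, a n = 0) → (g a).support ⊆ T) :
    ¬ Function.Injective g := by
  intro g_injective
  let shift (j : Fin (T.card + 1)) : ℕ := N + j
  have shift_injective : Function.Injective shift := fun i j hij ↦
    Fin.ext (Nat.add_left_cancel hij)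
  let h := g ∘ₗ Function.ExtendByZero.linearMap D shift
  have h_mem (v) : h v ∈ Finsupp.supported D D (T : Set B) := by
    refine hg _ fun n hn ↦ Function.extend_apply' _ _ _ ?_
    rintro ⟨j, rfl⟩
    exact (Nat.le_add_right N j).not_gt hn
  have h_injective : Function.Injective (h.codRestrict _ h_mem) :=
    (Set.injective_codRestrict h_mem).mpr <|
      g_injective.comp (Function.extend_injective shift_injective _)
  let e : Finsupp.supported D D (T : Set B) ≃ₗ[D] (T → D) :=
    Finsupp.supportedEquivFinsupp _ ≪≫ₗ Finsupp.linearEquivFunOnFinite D D T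
  simpa using card_le_of_injective D (e.toLinearMap ∘ₗ h.codRestrict _ h_mem)
    (e.injective.comp h_injective)

theorem not_injective_nat_pi_to_finsupp [Nontrivial D] {x : D} (hx : x ∈ D⁰)
    [IsHausdorff (Ideal.span {x}) D] {B : Type*} (f : (ℕ → D) →ₗ[D] B →₀ D) :
    ¬ Function.Injective f := by
  intro f_injective
  let : TopologicalSpace D := ⊥
  have : DiscreteTopology D := ⟨rfl⟩
  let g := f ∘ₗ LinearMap.mulLeft D (fun n ↦ x ^ n)
  have g_injective : Function.Injective g := f_injective.comp fun a b hab ↦ funext fun n ↦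
    (mul_cancel_left_mem_nonZeroDivisors (pow_mem hx n)).mp (congrFun hab n)
  obtain ⟨T, hT⟩ := exists_eventually_support_subset g.toAddMonoidHom
    fun b ↦ isOpen_map_pow_mul_ne_zero x (Finsupp.lapply b ∘ₗ f)
  obtain ⟨_, ⟨a₀, N, rfl⟩, zero_mem, hN⟩ :=
    (PiNat.isTopologicalBasis_cylinders _).mem_nhds_iff.mp hT
  refine not_injective_of_support_subset (N := N) g (fun a ha ↦ hN ?_) g_injective
  rw [← PiNat.mem_cylinder_iff_eq.mp zero_mem]
  exact PiNat.mem_cylinder_iff.mpr ha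

theorem not_injective_pi_to_finsupp [Nontrivial D] {x : D} (hx : x ∈ D⁰)
    [IsHausdorff (Ideal.span {x}) D] {ι : Type*} [Infinite ι] {B : Type*}
    (f : (ι → D) →ₗ[D] B →₀ D) : ¬ Function.Injective f := by
  intro f_injective
  let e := Infinite.natEmbedding ι
  exact not_injective_nat_pi_to_finsupp hx (f ∘ₗ Function.ExtendByZero.linearMap D e)
    (f_injective.comp (Function.extend_injective e.injective _))

theorem isField_of_projective_pi (D : Type*) [CommRing D] [IsDomain D] [IsNoetherianRing D]
    (ι : Type*) [Infinite ι] [Module.Projective D (ι → D)] : IsField D := by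
  by_contra hD
  obtain ⟨x, x_ne_zero, x_not_isUnit⟩ := Ring.exists_not_isUnit_of_not_isField hD
  have : IsHausdorff (Ideal.span {x}) D :=
    .of_isDomain _ (by rwa [Ne, Ideal.span_singleton_eq_top])
  obtain ⟨s, hs⟩ := Module.projective_def.mp ‹Module.Projective D (ι → D)›
  exact not_injective_pi_to_finsupp (mem_nonZeroDivisors_of_ne_zero x_ne_zero) s hs.injective

end Sequences

/-- Let `R` be a Noetherian commutative ring and `ι` an infinite index set.
Then the `R`-module `R^ι` is projective if and only if `R` is Artinian. -/
theorem pi_projective_iff_isArtinianRing (R : Type u) [CommRing R] [IsNoetherianRing R]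
    (ι : Type u) [Infinite ι] :
    Module.Projective R (ι → R) ↔ IsArtinianRing R := by
  constructor
  · intro
    rw [isArtinianRing_iff_krullDimLE_zero, Ring.krullDimLE_zero_iff]
    intro p _
    have := Module.finitePresentation_of_finite R (R ⧸ p)
    have := projective_pi_of_finitePresentation R (R ⧸ p) ι
    exact Ideal.Quotient.maximal_of_isField p (isField_of_projective_pi (R ⧸ p) ι)
  · intro
    have : Module.Flat R (ι → R) := flat_pi fun _ ↦ R
    exact projective_of_flat_of_isArtinianRing (ι → R)
end

section
/- Let n ≥ 1, let (R_1, m_1), ..., (R_n, m_n) be local Artinian commutative rings, let R = R_1 × ⋯ × R_n, and let λ be an infinite cardinal (index set). Then R^λ is a free R-module if and only if card(R_k/m_k)^λ = card(R_1/m_1)^λ for every k ∈ {1,...,n}; and in that case the rank of R^λ over R equals card(R_1/m_1)^λ. -/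
universe u

/-!
Let `K` be a residue field of a commutative ring `S`, with finitely generated kernel `I`. Since `I`
is finitely generated, a function `ι → S` with values in `I` lies in `I • (ι → S)`, so a basis of
`ι → S` over `S` reduces to a basis of `ι → K` over `K`. By the Erdős–Kaplansky theorem the latter
has `#(ι → K)` elements; hence a free `ι → S` has rank `#(ι → K)` for every such `K`.

Conversely, over a local Artinian ring every basis of `ι → K` lifts to a basis of `ι → R`: the
lifts span by Nakayama's lemma for the nilpotent maximal ideal. They are independent because,
for finitely many of them, the vectors of their values at the points of `ι` span modulo the maximal
ideal, hence span, and so no nontrivial linear form vanishes on all of them. If the `ι → R k` have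
bases indexed by the same type, these combine to a basis over the finite product.
-/

open Module Cardinal IsLocalRing

section Reduction

variable {R A M N B : Type*} [CommRing R] [CommRing A] [Algebra R A]
  [AddCommGroup M] [Module R M] [AddCommGroup N] [Module R N] [Module A N] [IsScalarTower R A N]

theorem restrictScalars_span_range_comp (hA : Function.Surjective (algebraMap R A))
    (f : M →ₗ[R] N) (v : B → M) :
    (Submodule.span A (Set.range (f ∘ v))).restrictScalars R =
      (Submodule.span R (Set.range v)).map f := by
  rw [Submodule.restrictScalars_span R A hA, Submodule.map_span, Set.range_comp]

theorem basis_repr_mem_of_mem_smul_top (b : Basis B R M) {I : Ideal R} {x : M}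
    (hx : x ∈ I • (⊤ : Submodule R M)) (i : B) : b.repr x i ∈ I := by
  have hcoord : b.coord i x ∈ (I • (⊤ : Submodule R M)).map (b.coord i) :=
    Submodule.mem_map_of_mem hx
  rw [Submodule.map_smul''] at hcoord
  exact Ideal.mul_le_left hcoord

theorem exists_basis_eq_comp_of_ker_eq_smul_top (hA : Function.Surjective (algebraMap R A))
    (f : M →ₗ[R] N) (hf : Function.Surjective f)
    (hker : LinearMap.ker f = RingHom.ker (algebraMap R A) • (⊤ : Submodule R M))
    (b : Basis B R M) : ∃ c : Basis B A N, ⇑c = f ∘ b := by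
  have hli : LinearIndependent A (f ∘ b) := by
    refine linearIndependent_iff'.mpr fun s g hg i hi => ?_
    choose g' hg' using fun j => hA (g j)
    have hrel : f (∑ j ∈ s, g' j • b j) = 0 := by
      simpa only [map_sum, map_smul, ← algebraMap_smul A (g' _), hg', Function.comp_apply] using hg
    have hrepr : b.repr (∑ j ∈ s, g' j • b j) i = g' i := by
      classical simp [Finsupp.single_apply, hi]
    rw [← hg', ← RingHom.mem_ker, ← hrepr]
    exact basis_repr_mem_of_mem_smul_top b (hker ▸ hrel) i
  have hsp : Submodule.span A (Set.range (f ∘ b)) = ⊤ := by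
    rw [← Submodule.restrictScalars_eq_top_iff R, restrictScalars_span_range_comp hA, b.span_eq,
      Submodule.map_top, LinearMap.range_eq_top.mpr hf]
  exact ⟨.mk hli hsp.ge, Basis.coe_mk _ _⟩

theorem eq_top_of_sup_smul_top_eq_top {I : Ideal R} (hI : IsNilpotent I) {P : Submodule R M}
    (hP : P ⊔ I • ⊤ = ⊤) : P = ⊤ := by
  have sup_pow_smul_top (n : ℕ) : P ⊔ I ^ n • ⊤ = ⊤ := by
    induction n with
    | zero => simp
    | succ n ih =>
      refine top_le_iff.mp ?_
      calc ⊤ = P ⊔ I • (P ⊔ I ^ n • ⊤) := by rw [ih, hP]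
        _ = (P ⊔ I • P) ⊔ I ^ (n + 1) • ⊤ := by
          rw [Submodule.smul_sup, ← Submodule.mul_smul, ← pow_succ', sup_assoc]
        _ ≤ P ⊔ I ^ (n + 1) • ⊤ := sup_le_sup_right (sup_le le_rfl Submodule.smul_le_right) _
  obtain ⟨n, hn⟩ := hI
  simpa [hn] using sup_pow_smul_top n

theorem span_range_eq_top_of_isNilpotent_ker (hA : Function.Surjective (algebraMap R A))
    (hnil : IsNilpotent (RingHom.ker (algebraMap R A))) (f : M →ₗ[R] N)
    (hker : LinearMap.ker f = RingHom.ker (algebraMap R A) • (⊤ : Submodule R M))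
    {v : B → M} (hv : Submodule.span A (Set.range (f ∘ v)) = ⊤) :
    Submodule.span R (Set.range v) = ⊤ := by
  refine eq_top_of_sup_smul_top_eq_top hnil ?_
  rw [← hker, ← Submodule.comap_map_eq, ← restrictScalars_span_range_comp hA, hv,
    Submodule.restrictScalars_top, Submodule.comap_top]

end Reduction

section Functions

variable {R ι : Type*} [CommRing R]

theorem mem_smul_top_pi_iff {M : ι → Type*} [∀ t, AddCommGroup (M t)] [∀ t, Module R (M t)]
    {I : Ideal R} (hI : I.FG) {x : ∀ t, M t} :
    x ∈ I • (⊤ : Submodule R (∀ t, M t)) ↔ ∀ t, x t ∈ I • (⊤ : Submodule R (M t)) := by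
  refine ⟨fun hx t => ?_, fun hx => ?_⟩
  · have hxt : x t ∈ (I • (⊤ : Submodule R (∀ t, M t))).map (LinearMap.proj t) :=
      Submodule.mem_map_of_mem hx
    rw [Submodule.map_smul''] at hxt
    exact Submodule.smul_mono le_rfl le_top hxt
  induction I, hI using Submodule.fg_induction generalizing x with
  | singleton a =>
    simp only [Ideal.submodule_span_eq, Submodule.ideal_span_singleton_smul,
      Submodule.mem_smul_pointwise_iff_exists] at hx ⊢
    choose y _ hy using hx
    exact ⟨y, Submodule.mem_top, funext hy⟩
  | sup I J _ _ ihI ihJ =>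
    simp only [Submodule.sup_smul, Submodule.mem_sup] at hx ⊢
    choose y hy z hz hyz using hx
    exact ⟨y, ihI hy, z, ihJ hz, funext hyz⟩

theorem ker_compLeft_linearMap {A : Type*} [CommRing A] [Algebra R A]
    (hfg : (RingHom.ker (algebraMap R A)).FG) :
    LinearMap.ker ((Algebra.linearMap R A).compLeft ι) =
      RingHom.ker (algebraMap R A) • (⊤ : Submodule R (ι → R)) := by
  ext x
  rw [mem_smul_top_pi_iff hfg]
  simp [funext_iff]

theorem linearIndependent_of_span_flip_eq_top {B : Type*} [Finite B] {v : B → ι → R}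
    (hv : Submodule.span R (Set.range (flip v)) = ⊤) : LinearIndependent R v := by
  classical
  cases nonempty_fintype B
  refine Fintype.linearIndependent_iff.mpr fun g hg i => ?_
  have hle : Submodule.span R (Set.range (flip v)) ≤
      LinearMap.ker (Fintype.linearCombination R g) := by
    rw [Submodule.span_le]
    rintro _ ⟨t, rfl⟩
    simpa [Fintype.linearCombination_apply, flip, mul_comm] using congrFun hg t
  have hsingle : Pi.single i 1 ∈ LinearMap.ker (Fintype.linearCombination R g) :=
    hle (hv ▸ Submodule.mem_top)
  simpa using hsingle

end Functions

section LocalRing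

variable {R ι B : Type*} [CommRing R] [IsLocalRing R]

theorem span_range_eq_top_of_residue [Finite B] (c : ι → B → R)
    (hc : Submodule.span (ResidueField R) (Set.range fun t i => residue R (c t i)) = ⊤) :
    Submodule.span R (Set.range c) = ⊤ := by
  cases nonempty_fintype B
  let f := (Algebra.linearMap R (ResidueField R)).compLeft B
  have hmap : (Submodule.span R (Set.range c)).map f = ⊤ := by
    rw [← restrictScalars_span_range_comp residue_surjective]
    exact (Submodule.restrictScalars_eq_top_iff ..).mpr hc
  have hker : LinearMap.ker f ≤ maximalIdeal R • ⊤ := fun x hx => by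
    classical
    rw [pi_eq_sum_univ' x]
    exact Submodule.sum_mem _ fun i _ =>
      Submodule.smul_mem_smul ((residue_eq_zero_iff _).mp (congrFun hx i)) Submodule.mem_top
  refine top_le_iff.mp (Submodule.le_of_le_smul_of_le_jacobson_bot Module.Finite.fg_top
    (maximalIdeal_le_jacobson ⊥) ?_)
  calc ⊤ = Submodule.span R (Set.range c) ⊔ LinearMap.ker f := by
        rw [← Submodule.comap_map_eq, hmap, Submodule.comap_top]
    _ ≤ Submodule.span R (Set.range c) ⊔ maximalIdeal R • ⊤ := sup_le_sup_left hker _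

theorem linearIndependent_of_residue {v : B → ι → R}
    (hv : LinearIndependent (ResidueField R) fun i t => residue R (v i t)) :
    LinearIndependent R v := by
  rw [linearIndependent_iff_finset_linearIndependent] at hv ⊢
  exact fun s => linearIndependent_of_span_flip_eq_top
    (span_range_eq_top_of_residue _ (span_flip_eq_top_iff_linearIndependent.mpr (hv s)))

theorem nonempty_basis_fun_of_residueField [IsArtinianRing R]
    (b : Basis B (ResidueField R) (ι → ResidueField R)) : Nonempty (Basis B R (ι → R)) := by
  choose v hv using fun i t => residue_surjective (b i t)
  let f := (Algebra.linearMap R (ResidueField R)).compLeft ι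
  have hfv : f ∘ v = b := funext₂ hv
  have hnil : IsNilpotent (RingHom.ker (algebraMap R (ResidueField R))) := by
    rw [ResidueField.algebraMap_eq, ker_residue]
    exact (isArtinianRing_iff_isNilpotent_maximalIdeal R).mp inferInstance
  have hli : LinearIndependent R v := linearIndependent_of_residue (hfv ▸ b.linearIndependent :)
  have hsp : Submodule.span R (Set.range v) = ⊤ :=
    span_range_eq_top_of_isNilpotent_ker residue_surjective hnil f
      (ker_compLeft_linearMap (IsNoetherian.noetherian _)) (hfv ▸ b.span_eq)
  exact ⟨.mk hli hsp.ge⟩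

end LocalRing

section PiRing

variable {κ B : Type*} [Finite κ] {R : κ → Type*} [∀ k, CommRing (R k)]

theorem nonempty_basis_pi {M : κ → Type*} [∀ k, AddCommGroup (M k)] [∀ k, Module (R k) (M k)]
    (b : ∀ k, Basis B (R k) (M k)) : Nonempty (Basis B (∀ k, R k) (∀ k, M k)) := by
  let repr (x : ∀ k, M k) : B →₀ ∀ k, R k :=
    .ofSupportFinite (fun i k => (b k).repr (x k) i) <| by
      refine (Set.finite_iUnion fun k => ((b k).repr (x k)).support.finite_toSet).subset ?_
      intro i hi
      simpa [funext_iff] using hi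
  have repr_apply x i k : repr x i k = (b k).repr (x k) i := rfl
  exact ⟨.ofRepr
    { toFun := repr
      invFun := fun c k => (b k).repr.symm (c.mapRange (· k) rfl)
      map_add' := fun x y => by ext; simp [repr_apply]
      map_smul' := fun a x => by ext; simp [repr_apply]
      left_inv := fun x => funext fun k => (b k).repr.injective <| by ext; simp [repr_apply]
      right_inv := fun c => by ext; simp [repr_apply] }⟩

theorem free_fun_pi_of_basis {ι : Type*} (b : ∀ k, Basis B (R k) (ι → R k)) :
    Free (∀ k, R k) (ι → ∀ k, R k) := by
  obtain ⟨c⟩ := nonempty_basis_pi b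
  let e : (ι → ∀ k, R k) ≃ₗ[∀ k, R k] ∀ k, ι → R k :=
    { Equiv.piComm fun _ k => R k with
      map_add' := fun _ _ => rfl
      map_smul' := fun _ _ => rfl }
  exact .of_basis (c.map e.symm)

end PiRing

section Rank

universe v w

theorem lift_rank_fun_of_free {S : Type u} {K : Type v} {ι : Type w} [CommRing S] [Field K]
    [Algebra S K] [Infinite ι] [Free S (ι → S)] (hK : Function.Surjective (algebraMap S K))
    (hfg : (RingHom.ker (algebraMap S K)).FG) :
    lift.{max v w} (Module.rank S (ι → S)) = lift.{max u w} #(ι → K) := by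
  have : Nontrivial S := (algebraMap S K).domain_nontrivial
  let b := Free.chooseBasis S (ι → S)
  obtain ⟨c, -⟩ := exists_basis_eq_comp_of_ker_eq_smul_top hK
    ((Algebra.linearMap S K).compLeft ι) hK.comp_left (ker_compLeft_linearMap hfg) b
  rw [← b.mk_eq_rank'', ← rank_fun_infinite]
  exact c.mk_eq_rank

theorem rank_fun_pi_of_free {κ : Type w} [Finite κ] (R : κ → Type u) [∀ k, CommRing (R k)]
    [∀ k, IsLocalRing (R k)] [∀ k, IsNoetherianRing (R k)] (ι : Type v) [Infinite ι]
    [Free (∀ k, R k) (ι → ∀ k, R k)] (k : κ) :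
    Module.rank (∀ k, R k) (ι → ∀ k, R k) = lift.{w} #(ι → ResidueField (R k)) := by
  algebraize [(residue (R k)).comp (Pi.evalRingHom R k)]
  have hrank := lift_rank_fun_of_free (S := ∀ k, R k) (K := ResidueField (R k)) (ι := ι)
    (residue_surjective.comp (Function.surjective_eval k)) (IsNoetherian.noetherian _)
  rw [← lift_inj, hrank, lift_lift]

theorem nonempty_basis_fun_of_mk_eq {R : Type u} {ι : Type v} {B : Type w} [CommRing R]
    [IsLocalRing R] [IsArtinianRing R] [Infinite ι]
    (h : lift.{max u v} #B = lift.{w} #(ι → ResidueField R)) : Nonempty (Basis B R (ι → R)) := by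
  let b := Free.chooseBasis (ResidueField R) (ι → ResidueField R)
  rw [← rank_fun_infinite, ← b.mk_eq_rank''] at h
  obtain ⟨e⟩ := lift_mk_eq'.mp h
  exact nonempty_basis_fun_of_residueField (b.reindex e.symm)

theorem pi_free_iff_residue_pows_eq_general {κ : Type w} [Finite κ] (k₀ : κ) (R : κ → Type u)
    [∀ k, CommRing (R k)] [∀ k, IsLocalRing (R k)] [∀ k, IsArtinianRing (R k)]
    (ι : Type v) [Infinite ι] :
    (Free (∀ k, R k) (ι → ∀ k, R k) ↔
      ∀ k, #(ι → ResidueField (R k)) = #(ι → ResidueField (R k₀))) ∧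
    (Free (∀ k, R k) (ι → ∀ k, R k) →
      Module.rank (∀ k, R k) (ι → ∀ k, R k) = lift.{w} #(ι → ResidueField (R k₀))) := by
  refine ⟨⟨fun _ k => ?_, fun h => ?_⟩, fun _ => rank_fun_pi_of_free R ι k₀⟩
  · exact lift_injective ((rank_fun_pi_of_free R ι k).symm.trans (rank_fun_pi_of_free R ι k₀))
  · have hbasis (k : κ) : Nonempty (Basis (ι → ResidueField (R k₀)) (R k) (ι → R k)) :=
      nonempty_basis_fun_of_mk_eq (congrArg lift (h k).symm)
    exact free_fun_pi_of_basis fun k => (hbasis k).some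

end Rank

/-- Let `n ≥ 1`, let `(R 0, m 0), ..., (R (n-1), m (n-1))` be local
Artinian commutative rings, let `S = R 0 × ⋯ × R (n-1)` and let `ι` be an infinite index
set. Then `S^ι` is a free `S`-module if and only if
`card (R k / m k) ^ card ι = card (R 0 / m 0) ^ card ι` for every `k`; and in that case the
rank of `S^ι` over `S` equals `card (R 0 / m 0) ^ card ι`. -/
theorem pi_free_iff_residue_pows_eq (n : ℕ) (hn : 0 < n) (R : Fin n → Type u)
    [∀ k, CommRing (R k)] [∀ k, IsLocalRing (R k)] [∀ k, IsArtinianRing (R k)]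
    (ι : Type u) [Infinite ι] :
    (Module.Free (∀ k, R k) (ι → ∀ k, R k) ↔
      ∀ k : Fin n, Cardinal.mk (IsLocalRing.ResidueField (R k)) ^ Cardinal.mk ι =
        Cardinal.mk (IsLocalRing.ResidueField (R ⟨0, hn⟩)) ^ Cardinal.mk ι) ∧
    (Module.Free (∀ k, R k) (ι → ∀ k, R k) →
      Module.rank (∀ k, R k) (ι → ∀ k, R k) =
        Cardinal.mk (IsLocalRing.ResidueField (R ⟨0, hn⟩)) ^ Cardinal.mk ι) := by
  simpa only [power_def, lift_uzero] using pi_free_iff_residue_pows_eq_general ⟨0, hn⟩ R ι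
end
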